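/- Let $(W,S)$ be a Coxeter system with $S$ finite. Let $Q_W=\bigcup_{w\in W}w^{-1}Sw$ be its set of reflections, a quandle under $x*y=y^{-1}xy$, let $c(W)$ be the number of $W$-conjugacy classes of reflections, and let $$\mathrm{Ad}(Q_W)=\langle e_x\ (x\in Q_W)\mid e_y^{-1}e_xe_y=e_{x*y}\ (x,y\in Q_W)\rangle$$ be the adjoint group of $Q_W$. Then $\mathrm{Ad}(Q_W)_{\mathrm{Ab}}\cong\mathbb{Z}^{c(W)}$, the kernel of the abelianization map $\mathrm{Ad}(Q_W)\to\mathrm{Ad}(Q_W)_{\mathrm{Ab}}$ is isomorphic to the commutator subgroup $[W,W]$, and so there is a group extension $$1\to[W,W]\to\mathrm{Ad}(Q_W)\to\mathbb{Z}^{c(W)}\to1$$ whose projection is the abelianization map followed by an isomorphism $\mathrm{Ad}(Q_W)_{\mathrm{Ab}}\cong\mathbb{Z}^{c(W)}$. If $c(W)=1$ (that is, $S\neq\emptyset$ and all reflections of $W$ are conjugate in $W$), then this extension splits, and $\mathrm{Ad}(Q_W)$ is isomorphic to a semidirect product $[W,W]\rtimes\mathbb{Z}$; that is, there is an action of $\mathbb{Z}$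 on $[W,W]$ by automorphisms such that $\mathrm{Ad}(Q_W)\cong[W,W]\rtimes\mathbb{Z}$. -/

import Mathlib

universe u v

/-- The Coxeter quandle `Q_W`: the set of reflections of `W` (its operation is given below). -/
def CoxeterQuandle {B : Type u} {W : Type v} [Group W] {M : CoxeterMatrix B}
    (cs : CoxeterSystem M W) : Type v :=
  {w : W // cs.IsReflection w}

/-- The quandle structure on the set of reflections, by conjugation. Mathlib's quandles act from
the left, `x ◃ y = x y x⁻¹`; a reflection `x` is its own inverse, so this is `y * x = x⁻¹ y x`
in the right-handed convention. -/
instance CoxeterQuandle.instQuandle {B : Type u} {W : Type v} [Group W] {M : CoxeterMatrix B}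
    (cs : CoxeterSystem M W) : Quandle (CoxeterQuandle cs) where
  act x y := ⟨x.1 * y.1 * x.1⁻¹, y.2.conj x.1⟩
  self_distrib := by
    rintro ⟨x, _⟩ ⟨y, _⟩ ⟨z, _⟩
    apply Subtype.ext
    show x * (y * z * y⁻¹) * x⁻¹ = (x * y * x⁻¹) * (x * z * x⁻¹) * (x * y * x⁻¹)⁻¹
    group
  invAct x y := ⟨x.1⁻¹ * y.1 * x.1, by simpa using y.2.conj x.1⁻¹⟩
  left_inv := by
    rintro ⟨x, _⟩ ⟨y, _⟩
    apply Subtype.ext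
    show x⁻¹ * (x * y * x⁻¹) * x = y
    group
  right_inv := by
    rintro ⟨x, _⟩ ⟨y, _⟩
    apply Subtype.ext
    show x * (x⁻¹ * y * x) * x⁻¹ = y
    group
  fix := by
    rintro ⟨x, hx⟩
    apply Subtype.ext
    show x * x * x⁻¹ = x
    group

/-- The adjoint (enveloping) group `Ad(Q_W)`: the group generated by symbols `e_x`, `x ∈ Q_W`,
subject to `e_x e_y e_x⁻¹ = e_{x ◃ y}`. Replacing `y` by `x⁻¹ y x`, these relations are exactly
`e_x⁻¹ e_y e_x = e_{x⁻¹ y x}`. -/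
abbrev CoxeterAd {B : Type u} {W : Type v} [Group W] {M : CoxeterMatrix B}
    (cs : CoxeterSystem M W) : Type v :=
  Rack.EnvelGroup (CoxeterQuandle cs)

/-- The set of `W`-conjugacy classes of reflections. -/
def reflectionClasses {B : Type u} {W : Type v} [Group W] {M : CoxeterMatrix B}
    (cs : CoxeterSystem M W) : Set (ConjClasses W) :=
  ConjClasses.mk '' {t : W | cs.IsReflection t}

/-- There are finitely many classes of reflections, as each contains a simple reflection. -/
theorem reflectionClasses_finite {B : Type u} [Finite B] {W : Type v} [Group W]
    {M : CoxeterMatrix B} (cs : CoxeterSystem M W) : (reflectionClasses cs).Finite := by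
  refine (Set.finite_range fun i : B => ConjClasses.mk (cs.simple i)).subset ?_
  rintro _ ⟨_, ⟨w, i, rfl⟩, rfl⟩
  exact ⟨i, ConjClasses.mk_eq_mk_iff_isConj.mpr (isConj_iff.mpr ⟨w, rfl⟩)⟩

/-- `c(W)`: the number of `W`-conjugacy classes of reflections. -/
noncomputable def numReflectionClasses {B : Type u} {W : Type v} [Group W] {M : CoxeterMatrix B}
    (cs : CoxeterSystem M W) : ℕ :=
  (reflectionClasses cs).ncard

section FreeAbelian

variable {n : ℕ} {A : Type*}

/-- The homomorphism from `ℤⁿ` to a commutative group with prescribed values on the basis. -/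
noncomputable def intPowLift [CommGroup A] (f : Fin n → A) :
    Multiplicative (Fin n → ℤ) →* A where
  toFun v := ∏ i, f i ^ v.toAdd i
  map_one' := by simp
  map_mul' v w := by simp [zpow_add, Finset.prod_mul_distrib]

theorem intPowLift_single [CommGroup A] (f : Fin n → A) (i : Fin n) :
    intPowLift f (Multiplicative.ofAdd (Pi.single i 1)) = f i := by
  change ∏ j, f j ^ (Pi.single i (1 : ℤ) : Fin n → ℤ) j = f i
  rw [Finset.prod_eq_single i]
  · simp
  · intro j _ hj
    simp [hj]
  · simp

theorem intPow_hom_ext [CommMonoid A] {f g : Multiplicative (Fin n → ℤ) →* A}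
    (h : ∀ i, f (Multiplicative.ofAdd (Pi.single i 1)) =
      g (Multiplicative.ofAdd (Pi.single i 1))) : f = g := by
  apply MonoidHom.toAdditiveRight.injective
  refine AddMonoidHom.functions_ext' (Additive A) _ _ fun i => ?_
  ext
  exact h i

end FreeAbelian

theorem conj_pow_mul_of_involutions {K : Type*} [Group K] {a b : K} (ha : a * a = 1)
    (hb : b * b = 1) (k : ℕ) :
    (a * b) ^ k * a * ((a * b) ^ k)⁻¹ = (a * b) ^ (2 * k) * a := by
  have ha' : a⁻¹ = a := inv_eq_of_mul_eq_one_left ha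
  have hb' : b⁻¹ = b := inv_eq_of_mul_eq_one_left hb
  have h : a * ((a * b) ^ k)⁻¹ * a⁻¹ = (a * b) ^ k := by
    rw [← inv_pow, ← conj_pow, mul_inv_rev, hb', ha']
    congr 1
    rw [← mul_assoc, mul_assoc (a * b), ha, mul_one]
  rw [two_mul, pow_add, mul_assoc, mul_assoc]
  congr 1
  rw [← mul_inv_eq_iff_eq_mul, h]

namespace CoxeterAd

variable {B : Type u} {W : Type v} [Group W] {M : CoxeterMatrix B} (cs : CoxeterSystem M W)

/-- The generator `e_x` of `Ad(Q_W)`. -/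
def gen (x : CoxeterQuandle cs) : CoxeterAd cs :=
  Rack.toEnvelGroup (CoxeterQuandle cs) x

/-- The simple reflections as elements of the Coxeter quandle. -/
def simple (i : B) : CoxeterQuandle cs := ⟨cs.simple i, cs.isReflection_simple i⟩

theorem gen_mul_gen_mul_inv (x y : CoxeterQuandle cs) :
    gen cs x * gen cs y * (gen cs x)⁻¹ = gen cs ⟨x.1 * y.1 * x.1⁻¹, y.2.conj x.1⟩ :=
  ((Rack.toEnvelGroup (CoxeterQuandle cs)).map_act (x := x) (y := y)).symm

/-- The universal property of `Ad(Q_W)`. -/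
def lift {H : Type*} [Group H] (f : CoxeterQuandle cs → H)
    (hf : ∀ x y : CoxeterQuandle cs,
      f ⟨x.1 * y.1 * x.1⁻¹, y.2.conj x.1⟩ = f x * f y * (f x)⁻¹) :
    CoxeterAd cs →* H :=
  Rack.toEnvelGroup.map
    { toFun := f
      map_act' := fun {x y} => hf x y }

theorem closure_range_gen : Subgroup.closure (Set.range (gen cs)) = ⊤ := by
  refine eq_top_iff.mpr fun g _ => Quotient.inductionOn g fun a => ?_
  induction a with
  | unit => exact one_mem _
  | incl x => exact Subgroup.subset_closure ⟨x, rfl⟩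
  | mul a b ha hb => exact mul_mem ha hb
  | inv a ha => exact inv_mem ha

theorem hom_ext {H : Type*} [Monoid H] {f g : CoxeterAd cs →* H}
    (h : ∀ x, f (gen cs x) = g (gen cs x)) : f = g :=
  MonoidHom.eq_of_eqOn_dense (closure_range_gen cs) (by rintro _ ⟨x, rfl⟩; exact h x)

/-- The homomorphism `Ad(Q_W) → W` sending `e_x` to `x`. -/
def toGroup : CoxeterAd cs →* W :=
  lift cs (fun x => x.1) fun _ _ => rfl

@[simp]
theorem toGroup_gen (x : CoxeterQuandle cs) : toGroup cs (gen cs x) = x.1 := rfl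

theorem toGroup_surjective_of_mem {H : Subgroup (CoxeterAd cs)}
    (hH : ∀ i, gen cs (simple cs i) ∈ H) (w : W) : ∃ g ∈ H, toGroup cs g = w := by
  induction w using cs.simple_induction with
  | simple i => exact ⟨_, hH i, rfl⟩
  | one => exact ⟨1, one_mem _, map_one _⟩
  | mul w w' h h' =>
    obtain ⟨g, hg, rfl⟩ := h
    obtain ⟨g', hg', rfl⟩ := h'
    exact ⟨g * g', mul_mem hg hg', map_mul _ _ _⟩

theorem toGroup_surjective : Function.Surjective (toGroup cs) := fun w =>
  let ⟨g, _, hg⟩ := toGroup_surjective_of_mem cs (H := ⊤) (fun _ => Subgroup.mem_top _) w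
  ⟨g, hg⟩

/-- `Ad(Q_W)` permutes its generators by conjugation through the action of `W`. -/
theorem conj_gen (g : CoxeterAd cs) (x : CoxeterQuandle cs) :
    g * gen cs x * g⁻¹ = gen cs ⟨toGroup cs g * x.1 * (toGroup cs g)⁻¹, x.2.conj _⟩ := by
  have hg : g ∈ Subgroup.closure (Set.range (gen cs)) := by simp [closure_range_gen]
  induction hg using Subgroup.closure_induction generalizing x with
  | mem _ h =>
    obtain ⟨y, rfl⟩ := h
    exact gen_mul_gen_mul_inv cs y x
  | one =>
    rw [one_mul, inv_one, mul_one]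
    exact congrArg _ (Subtype.ext (by simp))
  | mul a b _ _ ha hb =>
    have : a * b * gen cs x * (a * b)⁻¹ = a * (b * gen cs x * b⁻¹) * a⁻¹ := by group
    rw [this, hb]
    exact (ha _).trans (congrArg _ (Subtype.ext (by simp [mul_assoc])))
  | inv a _ ha =>
    have := ha ⟨toGroup cs a⁻¹ * x.1 * (toGroup cs a⁻¹)⁻¹, x.2.conj _⟩
    have hx : (⟨toGroup cs a * (toGroup cs a⁻¹ * x.1 * (toGroup cs a⁻¹)⁻¹) * (toGroup cs a)⁻¹,
        (x.2.conj _).conj _⟩ : CoxeterQuandle cs) = x := by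
      apply Subtype.ext
      simp [mul_assoc]
    rw [← hx, ← this, hx]
    group

theorem ker_toGroup_le_center : (toGroup cs).ker ≤ Subgroup.center (CoxeterAd cs) := by
  intro g hg
  rw [MonoidHom.mem_ker] at hg
  rw [Subgroup.mem_center_iff]
  intro h
  have hh : h ∈ Subgroup.closure (Set.range (gen cs)) := by simp [closure_range_gen]
  suffices h ∈ Subgroup.centralizer {g} from (Subgroup.mem_centralizer_singleton_iff.mp this)
  refine (Subgroup.closure_le _).mpr ?_ hh
  rintro _ ⟨x, rfl⟩
  have := conj_gen cs g x
  simp only [hg, one_mul, inv_one, mul_one] at this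
  exact Subgroup.mem_centralizer_singleton_iff.mpr (mul_inv_eq_iff_eq_mul.mp this).symm

theorem gen_sq_mem_center (x : CoxeterQuandle cs) :
    gen cs x ^ 2 ∈ Subgroup.center (CoxeterAd cs) :=
  ker_toGroup_le_center cs (by
    rw [MonoidHom.mem_ker, map_pow, toGroup_gen]
    exact x.2.pow_two)

theorem exists_conj_gen {x y : CoxeterQuandle cs} (h : IsConj x.1 y.1) :
    ∃ g, g * gen cs x * g⁻¹ = gen cs y := by
  obtain ⟨w, hw⟩ := isConj_iff.mp h
  obtain ⟨g, rfl⟩ := toGroup_surjective cs w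
  exact ⟨g, (conj_gen cs g x).trans (congrArg _ (Subtype.ext hw))⟩

theorem gen_sq_eq_of_isConj {x y : CoxeterQuandle cs} (h : IsConj x.1 y.1) :
    gen cs x ^ 2 = gen cs y ^ 2 := by
  obtain ⟨g, hg⟩ := exists_conj_gen cs h
  rw [← hg, conj_pow, Subgroup.mem_center_iff.mp (gen_sq_mem_center cs x) g,
    mul_inv_cancel_right]

/-- Modulo the squares of the simple generators, the simple generators of `Ad(Q_W)` satisfy the
Coxeter relations. -/
theorem isLiftable_of_sq_eq_one {K : Type*} [Group K] (π : CoxeterAd cs →* K)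
    (hπ : ∀ i, π (gen cs (simple cs i)) ^ 2 = 1) :
    M.IsLiftable fun i => π (gen cs (simple cs i)) := by
  intro i j
  have hs (l : B) : π (gen cs (simple cs l)) * π (gen cs (simple cs l)) = 1 := by
    rw [← pow_two, hπ]
  have hW (k : ℕ) := conj_pow_mul_of_involutions (cs.simple_mul_simple_self i)
    (cs.simple_mul_simple_self j) k
  have hK (k : ℕ) := conj_pow_mul_of_involutions (hs i) (hs j) k
  have hG (k : ℕ) := conj_gen cs ((gen cs (simple cs i) * gen cs (simple cs j)) ^ k) (simple cs i)
  have key (k : ℕ) (l : B)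
      (h : (cs.simple i * cs.simple j) ^ (2 * k) * cs.simple i = cs.simple l) :
      (π (gen cs (simple cs i)) * π (gen cs (simple cs j))) ^ (2 * k) *
        π (gen cs (simple cs i)) = π (gen cs (simple cs l)) := by
    rw [← hK, ← map_mul, ← map_pow, ← map_mul, ← map_inv, ← map_mul, hG]
    congr 2
    apply Subtype.ext
    simp only [map_pow, map_mul, toGroup_gen]
    exact (hW k).trans h
  have hM := cs.simple_mul_simple_pow i j
  beta_reduce
  obtain ⟨k, hk⟩ := Nat.even_or_odd' (M i j)
  rcases hk with hk | hk
  · rw [hk] at hM ⊢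
    have := key k i (by rw [hM, one_mul])
    exact mul_eq_right.mp this
  · rw [hk] at hM ⊢
    have := key k j (by
      rw [pow_succ, ← mul_assoc] at hM
      simpa using eq_inv_of_mul_eq_one_left hM)
    rw [pow_succ, ← mul_assoc, this, hs]

/-- If a homomorphism from `Ad(Q_W)` kills the squares of the simple generators, then it kills the
kernel of `Ad(Q_W) → W`. -/
theorem ker_toGroup_le_ker {K : Type*} [Group K] (π : CoxeterAd cs →* K)
    (hπ : ∀ i, π (gen cs (simple cs i)) ^ 2 = 1) : (toGroup cs).ker ≤ π.ker := by
  let f : W →* K := cs.lift ⟨_, isLiftable_of_sq_eq_one cs π hπ⟩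
  have hi (i : B) : gen cs (simple cs i) ∈ (f.comp (toGroup cs)).eqLocus π :=
    cs.lift_apply_simple (isLiftable_of_sq_eq_one cs π hπ) i
  have hf : f.comp (toGroup cs) = π := by
    refine hom_ext cs fun x => ?_
    obtain ⟨w, i, hw⟩ := x.2
    obtain ⟨g, hg, rfl⟩ := toGroup_surjective_of_mem cs hi w
    have hx : g * gen cs (simple cs i) * g⁻¹ = gen cs x :=
      (conj_gen cs g _).trans (congrArg _ (Subtype.ext hw.symm))
    rw [← hx]
    exact mul_mem (mul_mem hg (hi i)) (inv_mem hg)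
  intro g hg
  rw [MonoidHom.mem_ker] at hg ⊢
  rw [← hf, MonoidHom.comp_apply, hg, map_one]

section Classes

open scoped IsMulCommutative

variable {n : ℕ} {cls : CoxeterQuandle cs → Fin n}

/-- The homomorphism `Ad(Q_W) → ℤⁿ` sending `e_x` to the basis vector of the class of `x`. -/
def toIntPow (hcls : ∀ x y, cls x = cls y ↔ IsConj x.1 y.1) :
    CoxeterAd cs →* Multiplicative (Fin n → ℤ) :=
  lift cs (fun x => Multiplicative.ofAdd (Pi.single (cls x) 1)) fun x y => by
    rw [mul_comm (Multiplicative.ofAdd _), mul_inv_cancel_right,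
      (hcls ⟨x.1 * y.1 * x.1⁻¹, y.2.conj x.1⟩ y).mpr (isConj_iff.mpr ⟨x.1, rfl⟩).symm]

theorem toIntPow_gen (hcls : ∀ x y, cls x = cls y ↔ IsConj x.1 y.1) (x : CoxeterQuandle cs) :
    toIntPow cs hcls (gen cs x) = Multiplicative.ofAdd (Pi.single (cls x) 1) := rfl

theorem abelianization_of_gen_eq {x y : CoxeterQuandle cs} (h : IsConj x.1 y.1) :
    Abelianization.of (gen cs x) = Abelianization.of (gen cs y) := by
  obtain ⟨g, hg⟩ := exists_conj_gen cs h
  rw [← hg, map_mul, map_mul, map_inv, mul_comm (Abelianization.of g), mul_inv_cancel_right]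

/-- The abelianization of `Ad(Q_W)` is free abelian on the classes of reflections. -/
noncomputable def abelianizationEquiv (hcls : ∀ x y, cls x = cls y ↔ IsConj x.1 y.1)
    (hsurj : Function.Surjective cls) :
    Abelianization (CoxeterAd cs) ≃* Multiplicative (Fin n → ℤ) :=
  MonoidHom.toMulEquiv (Abelianization.lift (toIntPow cs hcls))
    (intPowLift fun i => Abelianization.of (gen cs (Function.surjInv hsurj i)))
    (by
      refine Abelianization.hom_ext _ _ (hom_ext cs fun x => ?_)
      simp only [MonoidHom.comp_apply, Abelianization.lift_apply_of, toIntPow_gen,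
        intPowLift_single, MonoidHom.id_apply]
      exact abelianization_of_gen_eq cs ((hcls _ _).mp (Function.surjInv_eq hsurj _)))
    (intPow_hom_ext fun i => by
      simp only [MonoidHom.comp_apply, intPowLift_single, Abelianization.lift_apply_of,
        toIntPow_gen, Function.surjInv_eq, MonoidHom.id_apply])

theorem abelianizationEquiv_comp_of (hcls : ∀ x y, cls x = cls y ↔ IsConj x.1 y.1)
    (hsurj : Function.Surjective cls) :
    (abelianizationEquiv cs hcls hsurj).toMonoidHom.comp Abelianization.of =
      toIntPow cs hcls :=
  hom_ext cs fun _ => rfl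

theorem ker_toIntPow (hcls : ∀ x y, cls x = cls y ↔ IsConj x.1 y.1)
    (hsurj : Function.Surjective cls) : (toIntPow cs hcls).ker = commutator (CoxeterAd cs) := by
  rw [← abelianizationEquiv_comp_of cs hcls hsurj, ← Abelianization.ker_of]
  ext g
  simp

/-- The homomorphism `ℤⁿ → Ad(Q_W)` sending the basis vector of the class of `x` to `e_x²`. -/
noncomputable def sqHom (hsurj : Function.Surjective cls) :
    Multiplicative (Fin n → ℤ) →* CoxeterAd cs :=
  (Subgroup.center (CoxeterAd cs)).subtype.comp
    (intPowLift (A := Subgroup.center (CoxeterAd cs)) fun i => ⟨gen cs (Function.surjInv hsurj i) ^ 2, gen_sq_mem_center cs _⟩)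

theorem sqHom_single (hcls : ∀ x y, cls x = cls y ↔ IsConj x.1 y.1)
    (hsurj : Function.Surjective cls) (x : CoxeterQuandle cs) :
    sqHom cs hsurj (Multiplicative.ofAdd (Pi.single (cls x) 1)) = gen cs x ^ 2 := by
  rw [sqHom, MonoidHom.comp_apply, intPowLift_single]
  exact gen_sq_eq_of_isConj cs ((hcls _ _).mp (Function.surjInv_eq hsurj _))

theorem ker_toGroup_le_range_sqHom (hcls : ∀ x y, cls x = cls y ↔ IsConj x.1 y.1)
    (hsurj : Function.Surjective cls) : (toGroup cs).ker ≤ (sqHom cs hsurj).range := by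
  have hle : (sqHom cs hsurj).range ≤ Subgroup.center (CoxeterAd cs) := by
    rintro _ ⟨v, rfl⟩
    exact SetLike.coe_mem _
  have : (sqHom cs hsurj).range.Normal := ⟨fun a ha g => by
    rwa [Subgroup.mem_center_iff.mp (hle ha) g, mul_inv_cancel_right]⟩
  have := ker_toGroup_le_ker cs (QuotientGroup.mk' (sqHom cs hsurj).range) fun i => by
    rw [← map_pow, ← MonoidHom.mem_ker, QuotientGroup.ker_mk']
    exact ⟨_, sqHom_single cs hcls hsurj _⟩
  rwa [QuotientGroup.ker_mk'] at this

theorem toIntPow_sqHom (hcls : ∀ x y, cls x = cls y ↔ IsConj x.1 y.1)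
    (hsurj : Function.Surjective cls) (v : Multiplicative (Fin n → ℤ)) :
    toIntPow cs hcls (sqHom cs hsurj v) = v ^ 2 := by
  suffices (toIntPow cs hcls).comp (sqHom cs hsurj) = powMonoidHom 2 from DFunLike.congr_fun this v
  refine intPow_hom_ext fun i => ?_
  obtain ⟨x, rfl⟩ := hsurj i
  rw [MonoidHom.comp_apply, sqHom_single cs hcls, map_pow, toIntPow_gen, powMonoidHom_apply]

theorem ker_toGroup_inf_ker_toIntPow (hcls : ∀ x y, cls x = cls y ↔ IsConj x.1 y.1)
    (hsurj : Function.Surjective cls) :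
    (toGroup cs).ker ⊓ (toIntPow cs hcls).ker = ⊥ := by
  rw [eq_bot_iff]
  rintro g ⟨hg, hg'⟩
  obtain ⟨v, rfl⟩ := ker_toGroup_le_range_sqHom cs hcls hsurj hg
  have h : v ^ 2 = 1 := (toIntPow_sqHom cs hcls hsurj v).symm.trans hg'
  have hv : v = 1 := by
    apply Multiplicative.toAdd.injective
    funext i
    have := congrFun (congrArg Multiplicative.toAdd h) i
    simpa using this
  simp [hv]

/-- The projection `Ad(Q_W) → W` restricts to an isomorphism of commutator subgroups. -/
noncomputable def commutatorEquiv (hcls : ∀ x y, cls x = cls y ↔ IsConj x.1 y.1)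
    (hsurj : Function.Surjective cls) : commutator (CoxeterAd cs) ≃* commutator W :=
  have hmap : (commutator (CoxeterAd cs)).map (toGroup cs) = commutator W := by
    rw [commutator_def, Subgroup.map_commutator,
      Subgroup.map_top_of_surjective _ (toGroup_surjective cs), commutator_def]
  have hinj : Function.Injective ((toGroup cs).subgroupMap (commutator (CoxeterAd cs))) := by
    rw [injective_iff_map_eq_one]
    rintro ⟨g, hg⟩ h
    have h1 : toGroup cs g = 1 := congrArg Subtype.val h
    have h2 : g ∈ (toGroup cs).ker ⊓ (toIntPow cs hcls).ker :=
      ⟨h1, by rwa [ker_toIntPow cs hcls hsurj]⟩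
    rw [ker_toGroup_inf_ker_toIntPow cs hcls hsurj] at h2
    exact Subtype.ext h2
  (MulEquiv.ofBijective _ ⟨hinj, MonoidHom.subgroupMap_surjective _ _⟩).trans
    (MulEquiv.subgroupCongr hmap)

/-- The extension `1 → [W,W] → Ad(Q_W) → ℤⁿ → 1`. -/
noncomputable def extension (hcls : ∀ x y, cls x = cls y ↔ IsConj x.1 y.1)
    (hsurj : Function.Surjective cls) :
    GroupExtension (commutator W) (CoxeterAd cs) (Multiplicative (Fin n → ℤ)) where
  inl := (commutator (CoxeterAd cs)).subtype.comp (commutatorEquiv cs hcls hsurj).symm.toMonoidHom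
  rightHom := toIntPow cs hcls
  inl_injective := Subtype.val_injective.comp (commutatorEquiv cs hcls hsurj).symm.injective
  range_inl_eq_ker_rightHom := by
    rw [ker_toIntPow cs hcls hsurj, MonoidHom.range_comp,
      MonoidHom.range_eq_top.mpr (commutatorEquiv cs hcls hsurj).symm.surjective,
      ← MonoidHom.range_eq_map, Subgroup.range_subtype]
  rightHom_surjective := by
    rw [← abelianizationEquiv_comp_of cs hcls hsurj]
    exact (abelianizationEquiv cs hcls hsurj).surjective.comp (QuotientGroup.mk'_surjective _)

/-- For a single class of reflections the extension splits, as its quotient is infinite cyclic. -/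
theorem nonempty_splitting (hcls : ∀ x y, cls x = cls y ↔ IsConj x.1 y.1)
    (hsurj : Function.Surjective cls) (hn : n = 1) :
    Nonempty (extension cs hcls hsurj).Splitting := by
  subst hn
  obtain ⟨x, -⟩ := hsurj 0
  let σ : Multiplicative (Fin 1 → ℤ) →* CoxeterAd cs :=
    (zpowersHom _ (gen cs x)).comp (Pi.evalAddMonoidHom (fun _ : Fin 1 => ℤ) 0).toMultiplicative
  have hσ : (toIntPow cs hcls).comp σ = MonoidHom.id _ := by
    refine intPow_hom_ext fun i => ?_
    obtain rfl := Subsingleton.elim i (cls x)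
    have : σ (Multiplicative.ofAdd (Pi.single (cls x) 1)) = gen cs x := by
      simp [σ, Subsingleton.elim (cls x) 0]
    rw [MonoidHom.comp_apply, this, toIntPow_gen, MonoidHom.id_apply]
  exact ⟨⟨σ, fun v => DFunLike.congr_fun hσ v⟩⟩

end Classes

/-- A numbering of the classes of reflections. -/
theorem exists_class_numbering [Finite B] :
    ∃ cls : CoxeterQuandle cs → Fin (numReflectionClasses cs),
      (∀ x y, cls x = cls y ↔ IsConj x.1 y.1) ∧ Function.Surjective cls := by
  have : Finite (reflectionClasses cs) := reflectionClasses_finite cs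
  let ε : reflectionClasses cs ≃ Fin (numReflectionClasses cs) :=
    Finite.equivFinOfCardEq (Nat.card_coe_set_eq _)
  refine ⟨fun x => ε ⟨ConjClasses.mk x.1, x.1, x.2, rfl⟩, fun x y => ?_, fun i => ?_⟩
  · exact ε.apply_eq_iff_eq.trans (Subtype.ext_iff.trans ConjClasses.mk_eq_mk_iff_isConj)
  · obtain ⟨⟨_, t, ht, rfl⟩, rfl⟩ := ε.surjective i
    exact ⟨⟨t, ht⟩, rfl⟩

end CoxeterAd

theorem stmt_17 {B : Type u} [Finite B] {W : Type v} [Group W] {M : CoxeterMatrix B}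
    (cs : CoxeterSystem M W) :
    -- the extension `1 → [W,W] → Ad(Q_W) → ℤ^{c(W)} → 1` given by abelianization,
    -- which splits if `c(W) = 1`
    (∃ (e : Abelianization (CoxeterAd cs) ≃*
          Multiplicative (Fin (numReflectionClasses cs) → ℤ))
        (E : GroupExtension (commutator W) (CoxeterAd cs)
          (Multiplicative (Fin (numReflectionClasses cs) → ℤ))),
        E.rightHom = e.toMonoidHom.comp Abelianization.of ∧
        (numReflectionClasses cs = 1 → Nonempty E.Splitting)) ∧
    -- the kernel of the abelianization map is isomorphic to `[W,W]`
    Nonempty ((Abelianization.of : CoxeterAd cs →* Abelianization (CoxeterAd cs)).ker ≃*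
      commutator W) ∧
    -- if `c(W) = 1`, then `Ad(Q_W) ≅ [W,W] ⋊ ℤ`
    (numReflectionClasses cs = 1 →
      ∃ α : Multiplicative ℤ →* MulAut (commutator W),
        Nonempty (CoxeterAd cs ≃* (commutator W) ⋊[α] Multiplicative ℤ)) := by
  obtain ⟨cls, hcls, hsurj⟩ := CoxeterAd.exists_class_numbering cs
  refine ⟨⟨CoxeterAd.abelianizationEquiv cs hcls hsurj, CoxeterAd.extension cs hcls hsurj,
    (CoxeterAd.abelianizationEquiv_comp_of cs hcls hsurj).symm,
    CoxeterAd.nonempty_splitting cs hcls hsurj⟩,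
    ⟨(MulEquiv.subgroupCongr (Abelianization.ker_of _)).trans
      (CoxeterAd.commutatorEquiv cs hcls hsurj)⟩, fun h => ?_⟩
  obtain ⟨s⟩ := CoxeterAd.nonempty_splitting cs hcls hsurj h
  have : Unique (Fin (numReflectionClasses cs)) := h ▸ (inferInstance : Unique (Fin 1))
  exact ⟨_, ⟨s.semidirectProductMulEquiv.symm.trans (SemidirectProduct.congr'
    (MulEquiv.refl _) (AddEquiv.toMultiplicative (AddEquiv.funUnique _ ℤ)))⟩⟩
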